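/- The squared-momentum operator (p·p)₁ := q^{1/2} P₋₁ P₁ + (1+q⁻¹)^{−1} P₀² acts diagonally on the basis of V, with (q^{1/2} P₋₁ P₁ + (1+q⁻¹)^{−1} P₀²) e_{π₀,π₁,j} = M² q^{2(1+π₁)} e_{π₀,π₁,j} for every (π₀,π₁,j) ∈ S. In particular its eigenvalues M² q^{2(1+π₁)}, π₁ ∈ ℤ, are strictly positive and form a discrete set accumulating only at 0. -/

import Mathlib

/-!
On a basis vector, `P₋₁ P₁` is diagonal with entry `M² (1 - q^(2π₀+2)) q^(3/2+2π₁)`, and `P₀²` with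
entry `M² (1+q⁻¹) q^(4+2π₀+2π₁)`, since `ε² = 1`. In the combination
`q^(1/2) P₋₁ P₁ + (1+q⁻¹)⁻¹ P₀²` the terms in `q^(2π₀)` cancel, and `M² q^(2(1+π₁))` remains.

The eigenvalues form a two-sided geometric sequence. Since `x ↦ c * r ^ x` is a homeomorphism of
the real line onto the positive half-line, it carries the closed discrete subset `ℤ` to a closed
discrete subset of the half-line, which can accumulate in `ℝ` only at the boundary point `0`.
-/

/- The irreducible Hilbert-space representation of highest weight `w` of the q-Euclidean
algebra `U_q(e³)` (Theorem 3 of the paper): `S` is the index set of the q-lattice,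
`V` the space of finitely supported functions `S → ℂ` with canonical basis `e`,
and `P0, P1, Pm1, Lam, LamInv, K, Lp, Lm` realize the generators
`p⁰, p¹, p⁻¹, Λ, Λ⁻¹, k¹, L^{01}, L^{−1,0}`. -/

noncomputable section

/-- The q-lattice index set `S = {(π₀,π₁,j) ∈ ℤ³ : π₀ ≥ 0, j ≤ π₀}`. -/
structure SIdx : Type where
  π0 : ℤ
  π1 : ℤ
  j : ℤ
  hπ0 : 0 ≤ π0
  hj : j ≤ π0

instance : DecidableEq SIdx := fun _ _ => Classical.dec _

/-- `V`: finitely supported functions `S → ℂ`. -/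
abbrev V : Type := SIdx →₀ ℂ

/-- The canonical basis vector `e_{π₀,π₁,j}`. -/
def e (s : SIdx) : V := Finsupp.single s 1

/-- The linear operator on `V` determined by its values on the canonical basis. -/
def opOf (g : SIdx → V) : V →ₗ[ℂ] V :=
  Finsupp.lsum ℂ fun s => LinearMap.toSpanSingleton ℂ V (g s)

/-- `P₀ e_{π₀,π₁,j} = ε M (1+q⁻¹)^(1/2) q^(2+π₀+π₁) e_{π₀,π₁,j}`. -/
def P0 (q M ε : ℝ) : V →ₗ[ℂ] V :=
  opOf fun s => ((ε * M * Real.sqrt (1 + q⁻¹) * q ^ (2 + s.π0 + s.π1) : ℝ) : ℂ) • e s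

/-- `P₁ e_{π₀,π₁,j} = M (1−q^(2π₀+2))^(1/2) q^(1+π₁) e_{π₀+1,π₁,j+1}`. -/
def P1 (q M : ℝ) : V →ₗ[ℂ] V :=
  opOf fun s => ((M * Real.sqrt (1 - q ^ (2 * s.π0 + 2)) * q ^ (1 + s.π1) : ℝ) : ℂ) •
    e ⟨s.π0 + 1, s.π1, s.j + 1, by have h0 := s.hπ0; have h1 := s.hj; omega, by have h0 := s.hπ0; have h1 := s.hj; omega⟩

/-- `P₋₁ e_{π₀,π₁,j} = M (1−q^(2π₀))^(1/2) q^(1/2+π₁) e_{π₀−1,π₁,j−1}` (zero if `π₀ = 0`). -/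
def Pm1 (q M : ℝ) : V →ₗ[ℂ] V :=
  opOf fun s =>
    if h : 0 < s.π0 then
      ((M * Real.sqrt (1 - q ^ (2 * s.π0)) * q ^ ((1 : ℝ) / 2 + (s.π1 : ℝ)) : ℝ) : ℂ) •
        e ⟨s.π0 - 1, s.π1, s.j - 1, by have h0 := s.hπ0; have h1 := s.hj; omega, by have h0 := s.hπ0; have h1 := s.hj; omega⟩
    else 0

/-- `Λ e_{π₀,π₁,j} = e_{π₀,π₁+1,j}`. -/
def Lam : V →ₗ[ℂ] V := opOf fun s => e ⟨s.π0, s.π1 + 1, s.j, s.hπ0, s.hj⟩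

/-- `Λ⁻¹ e_{π₀,π₁,j} = e_{π₀,π₁−1,j}`. -/
def LamInv : V →ₗ[ℂ] V := opOf fun s => e ⟨s.π0, s.π1 - 1, s.j, s.hπ0, s.hj⟩

/-- `K e_{π₀,π₁,j} = q^(2j+w) e_{π₀,π₁,j}`. -/
def K (q w : ℝ) : V →ₗ[ℂ] V :=
  opOf fun s => ((q ^ (2 * (s.j : ℝ) + w) : ℝ) : ℂ) • e s

/-- `L⁺ e_{π₀,π₁,j} = q^(−3/2−π₀) [(1+q^(π₀−j−w))(1−q^(π₀−j))/((q⁻¹−1)(1−q))]^(1/2)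
    e_{π₀,π₁,j+1}` (zero if `j = π₀`). -/
def Lp (q w : ℝ) : V →ₗ[ℂ] V :=
  opOf fun s =>
    if h : s.j < s.π0 then
      ((q ^ (-(3 : ℝ) / 2 - (s.π0 : ℝ)) *
          Real.sqrt ((1 + q ^ ((s.π0 : ℝ) - (s.j : ℝ) - w)) *
            (1 - q ^ ((s.π0 : ℝ) - (s.j : ℝ))) / ((q⁻¹ - 1) * (1 - q))) : ℝ) : ℂ) •
        e ⟨s.π0, s.π1, s.j + 1, s.hπ0, by have h0 := s.hπ0; have h1 := s.hj; omega⟩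
    else 0

/-- `L⁻ e_{π₀,π₁,j} = q^(−π₀) [(1+q^(π₀−j+1−w))(1−q^(π₀−j+1))/((q⁻¹−1)(1−q))]^(1/2)
    e_{π₀,π₁,j−1}`. -/
def Lm (q w : ℝ) : V →ₗ[ℂ] V :=
  opOf fun s =>
    ((q ^ (-(s.π0 : ℝ)) *
        Real.sqrt ((1 + q ^ ((s.π0 : ℝ) - (s.j : ℝ) + 1 - w)) *
          (1 - q ^ ((s.π0 : ℝ) - (s.j : ℝ) + 1)) / ((q⁻¹ - 1) * (1 - q))) : ℝ) : ℂ) •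
      e ⟨s.π0, s.π1, s.j - 1, s.hπ0, by have h0 := s.hπ0; have h1 := s.hj; omega⟩

open Set Filter Topology

section GeometricSequence

theorem closure_image_val_subset {X : Type*} [TopologicalSpace X] {U : Set X} {s : Set U}
    (hs : IsClosed s) : closure (Subtype.val '' s) ⊆ Subtype.val '' s ∪ closure U \ U := by
  intro x hx
  by_cases hxU : x ∈ U
  · have hmem : (⟨x, hxU⟩ : U) ∈ closure s := closure_subtype.2 hx
    exact Or.inl ⟨⟨x, hxU⟩, hs.closure_subset hmem, rfl⟩
  · exact Or.inr ⟨closure_mono (Subtype.coe_image_subset U s) hx, hxU⟩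

variable {c r : ℝ}

theorem isClosedEmbedding_mul_zpow (hc : 0 < c) (hr0 : 0 < r) (hr1 : r ≠ 1) :
    IsClosedEmbedding fun n : ℤ ↦ (⟨c * r ^ n, mul_pos hc (zpow_pos hr0 n)⟩ : Ioi (0 : ℝ)) := by
  have hlog : Real.log r ≠ 0 := Real.log_ne_zero_of_pos_of_ne_one hr0 hr1
  let φ : ℝ ≃ₜ Ioi (0 : ℝ) :=
    ((Homeomorph.mulRight₀ (Real.log r) hlog).trans (Homeomorph.addLeft (Real.log c))).trans
      Real.expOrderIso.toHomeomorph
  have hφ : ∀ n : ℤ, φ n = ⟨c * r ^ n, mul_pos hc (zpow_pos hr0 n)⟩ := fun n ↦ by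
    refine Subtype.ext ?_
    change Real.exp (Real.log c + n * Real.log r) = c * r ^ n
    rw [Real.exp_add, Real.exp_log hc, ← Real.log_zpow, Real.exp_log (zpow_pos hr0 n)]
  exact funext hφ ▸ φ.isClosedEmbedding.comp Int.isClosedEmbedding_coe_real

theorem discreteTopology_range_mul_zpow (hc : 0 < c) (hr0 : 0 < r) (hr1 : r ≠ 1) :
    DiscreteTopology (range fun n : ℤ ↦ c * r ^ n) :=
  (IsEmbedding.subtypeVal.comp
    (isClosedEmbedding_mul_zpow hc hr0 hr1).isEmbedding).toHomeomorph.discreteTopology_iff.1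
      inferInstance

theorem closure_range_mul_zpow_subset (hc : 0 < c) (hr0 : 0 < r) (hr1 : r ≠ 1) :
    closure (range fun n : ℤ ↦ c * r ^ n) ⊆ insert 0 (range fun n : ℤ ↦ c * r ^ n) := by
  have h := closure_image_val_subset (isClosedEmbedding_mul_zpow hc hr0 hr1).isClosed_range
  rwa [← range_comp, closure_Ioi, Ici_sdiff_Ioi_same, union_singleton] at h

theorem zero_mem_closure_range_mul_zpow (c : ℝ) (hr : |r| < 1) :
    0 ∈ closure (range fun n : ℤ ↦ c * r ^ n) := by
  have hlim : Tendsto (fun n : ℕ ↦ c * r ^ n) atTop (𝓝 0) := by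
    simpa using (tendsto_pow_atTop_nhds_zero_of_abs_lt_one hr).const_mul c
  exact mem_closure_of_tendsto hlim (Eventually.of_forall fun n ↦ ⟨n, by simp⟩)

end GeometricSequence

section Momentum

variable {q ε : ℝ}

theorem opOf_apply_e (g : SIdx → V) (s : SIdx) : opOf g (e s) = g s := by
  simp [opOf, e]

theorem Pm1_P1_apply_e (hq0 : 0 < q) (hq1 : q ≤ 1) (M : ℝ) (s : SIdx) :
    Pm1 q M (P1 q M (e s)) =
      ((M ^ 2 * (1 - q ^ (2 * s.π0 + 2)) * q ^ ((3 : ℝ) / 2 + 2 * s.π1) : ℝ) : ℂ) • e s := by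
  have hπ0 := s.hπ0
  have hpos : 0 < s.π0 + 1 := by omega
  have hraise : 2 * (s.π0 + 1) = 2 * s.π0 + 2 := by ring
  have hsqrt : √(1 - q ^ (2 * s.π0 + 2)) ^ 2 = 1 - q ^ (2 * s.π0 + 2) :=
    Real.sq_sqrt (sub_nonneg.2 (zpow_le_one₀ hq0 hq1 (by omega)))
  have hpow : q ^ (1 + s.π1) * q ^ ((1 : ℝ) / 2 + s.π1) = q ^ ((3 : ℝ) / 2 + 2 * s.π1) := by
    rw [← Real.rpow_intCast, ← Real.rpow_add hq0]
    push_cast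
    ring_nf
  rw [P1, opOf_apply_e, map_smul, Pm1, opOf_apply_e, dif_pos hpos, smul_smul,
    ← Complex.ofReal_mul]
  simp only [add_sub_cancel_right, hraise]
  congr 2
  linear_combination M ^ 2 * q ^ (1 + s.π1) * q ^ ((1 : ℝ) / 2 + s.π1) * hsqrt +
    M ^ 2 * (1 - q ^ (2 * s.π0 + 2)) * hpow

theorem P0_P0_apply_e (hq : 0 ≤ q) (M ε : ℝ) (s : SIdx) :
    P0 q M ε (P0 q M ε (e s)) =
      ((ε ^ 2 * M ^ 2 * (1 + q⁻¹) * q ^ (2 * (2 + s.π0 + s.π1)) : ℝ) : ℂ) • e s := by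
  have hsqrt : √(1 + q⁻¹) ^ 2 = 1 + q⁻¹ := Real.sq_sqrt (by positivity)
  rw [P0, opOf_apply_e, map_smul, opOf_apply_e, smul_smul, ← Complex.ofReal_mul,
    mul_comm 2 (2 + s.π0 + s.π1), zpow_mul, zpow_ofNat]
  congr 2
  linear_combination ε ^ 2 * M ^ 2 * (q ^ (2 + s.π0 + s.π1)) ^ 2 * hsqrt

/-- The square momentum Casimir `(p·p)₁ = p⁻¹ p₋₁ + p⁰ p₀ / (1 + q⁻¹)`, with the indices lowered by
the q-metric, `p₋₁ = q^(1/2) p¹` and `p₀ = p⁰`. -/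
def squaredMomentum (q M ε : ℝ) : V →ₗ[ℂ] V :=
  ((q ^ ((1 : ℝ) / 2) : ℝ) : ℂ) • (Pm1 q M ∘ₗ P1 q M) +
    (((1 + q⁻¹)⁻¹ : ℝ) : ℂ) • (P0 q M ε ∘ₗ P0 q M ε)

theorem squaredMomentum_apply_e (hq0 : 0 < q) (hq1 : q ≤ 1) (M : ℝ) (hε : ε ^ 2 = 1) (s : SIdx) :
    squaredMomentum q M ε (e s) = ((M ^ 2 * q ^ (2 * (1 + s.π1)) : ℝ) : ℂ) • e s := by
  have hhalf : q ^ ((1 : ℝ) / 2) * q ^ ((3 : ℝ) / 2 + 2 * s.π1) = q ^ (2 * (1 + s.π1)) := by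
    rw [← Real.rpow_intCast, ← Real.rpow_add hq0]
    push_cast
    ring_nf
  have hsplit : q ^ (2 * (2 + s.π0 + s.π1)) = q ^ (2 * s.π0 + 2) * q ^ (2 * (1 + s.π1)) := by
    rw [← zpow_add₀ hq0.ne']
    ring_nf
  have hcancel : (1 + q⁻¹)⁻¹ * (1 + q⁻¹) = 1 := inv_mul_cancel₀ (by positivity)
  rw [squaredMomentum, LinearMap.add_apply, LinearMap.smul_apply, LinearMap.smul_apply,
    LinearMap.comp_apply, LinearMap.comp_apply, Pm1_P1_apply_e hq0 hq1, P0_P0_apply_e hq0.le,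
    smul_smul, smul_smul, ← add_smul, ← Complex.ofReal_mul, ← Complex.ofReal_mul,
    ← Complex.ofReal_add]
  congr 2
  rw [hε, hsplit]
  linear_combination M ^ 2 * (1 - q ^ (2 * s.π0 + 2)) * hhalf +
    M ^ 2 * q ^ (2 * s.π0 + 2) * q ^ (2 * (1 + s.π1)) * hcancel

theorem setOf_eigenvalue_eq_range (hq : q ≠ 0) (M : ℝ) :
    {x : ℝ | ∃ π₁ : ℤ, x = M ^ 2 * q ^ (2 * (1 + π₁))} =
      range fun n : ℤ ↦ (M * q) ^ 2 * (q ^ 2) ^ n := by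
  have hterm (n : ℤ) : M ^ 2 * q ^ (2 * (1 + n)) = (M * q) ^ 2 * (q ^ 2) ^ n := by
    rw [zpow_mul, zpow_ofNat, zpow_one_add₀ (pow_ne_zero 2 hq), mul_pow, mul_assoc]
  ext x
  simp only [mem_ofPred_eq, mem_range, hterm, eq_comm]

end Momentum

/-- The squared-momentum operator
`(p·p)₁ = q^(1/2) P₋₁ P₁ + (1+q⁻¹)⁻¹ P₀²` acts diagonally on the basis with eigenvalues
`M² q^(2(1+π₁))`; these eigenvalues are strictly positive and form a discrete set whose
only accumulation point is `0`. -/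
theorem squared_momentum_diagonal
    (q M ε w : ℝ) (hq0 : 0 < q) (hq1 : q < 1) (hM : 0 < M)
    (hε : ε = 1 ∨ ε = -1) (hw : 0 ≤ w) :
    (∀ s : SIdx,
      (((q ^ ((1 : ℝ) / 2) : ℝ) : ℂ) • (Pm1 q M ∘ₗ P1 q M) +
        (((1 + q⁻¹)⁻¹ : ℝ) : ℂ) • (P0 q M ε ∘ₗ P0 q M ε)) (e s) =
        ((M ^ 2 * q ^ (2 * (1 + s.π1)) : ℝ) : ℂ) • e s) ∧
    (∀ π₁ : ℤ, 0 < M ^ 2 * q ^ (2 * (1 + π₁))) ∧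
    DiscreteTopology {x : ℝ | ∃ π₁ : ℤ, x = M ^ 2 * q ^ (2 * (1 + π₁))} ∧
    closure {x : ℝ | ∃ π₁ : ℤ, x = M ^ 2 * q ^ (2 * (1 + π₁))} ⊆
      insert 0 {x : ℝ | ∃ π₁ : ℤ, x = M ^ 2 * q ^ (2 * (1 + π₁))} ∧
    (0 : ℝ) ∈ closure {x : ℝ | ∃ π₁ : ℤ, x = M ^ 2 * q ^ (2 * (1 + π₁))} := by
  have hc : 0 < (M * q) ^ 2 := by positivity
  have hr0 : 0 < q ^ 2 := by positivity
  have hr1 : q ^ 2 < 1 := pow_lt_one₀ hq0.le hq1 two_ne_zero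
  rw [setOf_eigenvalue_eq_range hq0.ne' M]
  exact ⟨squaredMomentum_apply_e hq0 hq1.le M (sq_eq_one_iff.2 hε), fun π₁ ↦ by positivity,
    discreteTopology_range_mul_zpow hc hr0 hr1.ne, closure_range_mul_zpow_subset hc hr0 hr1.ne,
    zero_mem_closure_range_mul_zpow _ (by rwa [abs_of_pos hr0])⟩
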